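/- arXiv:2411.04070 — 2 statements merged into one kernel-verified Lean document; each statement's English description precedes it below -/
import Mathlib

section
/- Let P be a finite graded bounded poset. Then the χ-Chow polynomial satisfies ℋ_P(x) = 1 + x·Σ_{t ∈ P, ρ(t) > 1} ℋ_{trunc([0̂,t])}(x), and the left χ-augmented Chow polynomial satisfies G_P(x) = 1 + x·Σ_{t ∈ P, t ≠ 0̂} G_{trunc([0̂,t])}(x), where trunc(Q) denotes the truncation of a graded bounded poset Q (the subposet obtained by removing the coatoms of Q). -/
/-!
Write `χ̄` for the reduced kernel and `[n] = 1 + x + ⋯ + x^(n-1)`.  Since `χ = μ·ζ^rev`, one has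
`(x - 1)·ζ·χ̄ = ζ^rev - x·ζ`, i.e. `(ζ·χ̄)_{vw} = [ρ_{vw}] - 1` (`sum_red_chi`).  Hence
`ℋ = -χ̄⁻¹ = (-ζ·χ̄)⁻¹·ζ`, and for every row vector `c` the vector `K` solving `K·(-ζ·χ̄) = c`
satisfies `(c·ℋ)_t = Σ_{w ≤ t} K_w` (`sum_mul_chow`).  The choice `c = δ_{0̂}` yields the Chow
polynomial, and `c_w = x^{ρ(w)}` the left augmented Chow polynomial.

It remains to see that `K_t = x·(c'·ℋ')_t` on the truncation of `[0̂,t]`, where `c'` agrees with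
`c` below `t` and `x·c'_t = c_t` (`truncation_step`).  The solution `K'` on the truncation agrees
with `K` below `t`, so `Σ_w K'_w = c'_t + Σ_{w<t} K_w [ρ_{wt} - 1]`, summed over non-coatoms `w`.
Multiplying by `x` turns `[ρ_{wt} - 1]` into `[ρ_{wt}] - 1`, which vanishes at the coatoms; the
result is the recursion defining `K_t`.
-/

open Finset Polynomial
open scoped Classical

noncomputable section

variable {α : Type*}

/-- Convolution product in the incidence algebra of a locally finite poset over `ℤ[x]`.
Only the values on intervals `s ≤ t` are relevant. -/
def conv [PartialOrder α] [LocallyFiniteOrder α] (a b : α → α → Polynomial ℤ) :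
    α → α → Polynomial ℤ :=
  fun s t => ∑ w ∈ Finset.Icc s t, a s w * b w t

/-- The identity `δ` of the incidence algebra. -/
def dlt [PartialOrder α] : α → α → Polynomial ℤ :=
  fun s t => if s = t then 1 else 0

/-- The involution `a ↦ a^rev`, given by `(a^rev)_{st}(x) = x^{ρ_{st}} a_{st}(1/x)`. -/
def rev (ρ : α → α → ℕ) (a : α → α → Polynomial ℤ) : α → α → Polynomial ℤ :=
  fun s t => (a s t).reflect (ρ s t)

/-- A weak rank function on a poset. -/
structure IsWeakRank [Preorder α] (ρ : α → α → ℕ) : Prop where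
  pos : ∀ ⦃s t : α⦄, s < t → 0 < ρ s t
  add : ∀ ⦃s w t : α⦄, s ≤ w → w ≤ t → ρ s t = ρ s w + ρ w t

/-- `κ` is a `(P,ρ)`-kernel: it lies in `I_ρ(P)`, is `1` on the diagonal, and `κ⁻¹ = κ^rev`. -/
structure IsKernel [PartialOrder α] [LocallyFiniteOrder α] (ρ : α → α → ℕ)
    (κ : α → α → Polynomial ℤ) : Prop where
  degLE : ∀ ⦃s t : α⦄, s ≤ t → (κ s t).natDegree ≤ ρ s t
  diag : ∀ s : α, κ s s = 1
  left : ∀ ⦃s t : α⦄, s ≤ t → conv (rev ρ κ) κ s t = dlt s t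
  right : ∀ ⦃s t : α⦄, s ≤ t → conv κ (rev ρ κ) s t = dlt s t

/-- The reduced kernel `κ̄`: `κ̄_{st} = κ_{st}/(x-1)` for `s < t` and `κ̄_{ss} = -1`. -/
def red [PartialOrder α] (κ : α → α → Polynomial ℤ) : α → α → Polynomial ℤ :=
  fun s t => if s = t then -1 else κ s t /ₘ (X - 1)

/-- `H` is the Chow function of `κ`, i.e. `H = -(κ̄)⁻¹`. -/
structure IsChow [PartialOrder α] [LocallyFiniteOrder α] (κ H : α → α → Polynomial ℤ) : Prop where
  left : ∀ ⦃s t : α⦄, s ≤ t → conv (red κ) H s t = -dlt s t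
  right : ∀ ⦃s t : α⦄, s ≤ t → conv H (red κ) s t = -dlt s t

/-- `f` is the right KLS function of the kernel `κ`. -/
structure IsRightKLS [PartialOrder α] [LocallyFiniteOrder α] (ρ : α → α → ℕ)
    (κ f : α → α → Polynomial ℤ) : Prop where
  diag : ∀ s : α, f s s = 1
  degLT : ∀ ⦃s t : α⦄, s < t → 2 * (f s t).natDegree < ρ s t
  rev_eq : ∀ ⦃s t : α⦄, s ≤ t → rev ρ f s t = conv κ f s t

/-- `g` is the left KLS function of the kernel `κ`. -/
structure IsLeftKLS [PartialOrder α] [LocallyFiniteOrder α] (ρ : α → α → ℕ)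
    (κ g : α → α → Polynomial ℤ) : Prop where
  diag : ∀ s : α, g s s = 1
  degLT : ∀ ⦃s t : α⦄, s < t → 2 * (g s t).natDegree < ρ s t
  rev_eq : ∀ ⦃s t : α⦄, s ≤ t → rev ρ g s t = conv g κ s t

/-- `p` is symmetric with center of symmetry `d/2`, i.e. `p(x) = x^d p(1/x)`. -/
def PolySymm (d : ℕ) (p : Polynomial ℤ) : Prop := p.natDegree ≤ d ∧ p.reflect d = p

/-- All coefficients of `p` are non-negative. -/
def PolyNonneg (p : Polynomial ℤ) : Prop := ∀ n, 0 ≤ p.coeff n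

/-- The coefficient sequence of `p` is unimodal. -/
def PolyUnimodal (p : Polynomial ℤ) : Prop :=
  ∃ j, (∀ i < j, p.coeff i ≤ p.coeff (i + 1)) ∧ ∀ i, j ≤ i → p.coeff (i + 1) ≤ p.coeff i

end

noncomputable section

variable {α : Type*}

/-- `mu` is the Möbius function of the poset: `mu = ζ⁻¹`. -/
def IsMobius [PartialOrder α] [LocallyFiniteOrder α] (mu : α → α → ℤ) : Prop :=
  (∀ s : α, mu s s = 1) ∧
  (∀ ⦃s t : α⦄, s < t → ∑ w ∈ Finset.Icc s t, mu s w = 0) ∧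
  (∀ ⦃s t : α⦄, s < t → ∑ w ∈ Finset.Icc s t, mu w t = 0)

/-- The characteristic function `χ = μ·ζ^rev`, i.e. `χ_{st}(x) = Σ_{s≤w≤t} μ_{sw} x^{ρ_{wt}}`. -/
def chi [PartialOrder α] [LocallyFiniteOrder α] (ρ : α → α → ℕ) (mu : α → α → ℤ) :
    α → α → Polynomial ℤ :=
  fun s t => ∑ w ∈ Finset.Icc s t, Polynomial.C (mu s w) * X ^ ρ w t

/-- Convolution `ζ^rev · a`, where `ζ^rev_{sw} = x^{ρ_{sw}}`.  Applied to the Chow function `H`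
of the kernel `χ` (whose left KLS function is `g = ζ`) it gives the left augmented Chow function
`G = g^rev · H`; applied to the right KLS function `f` it gives the `Z`-function `Z = g^rev·f`. -/
def zrevConv [PartialOrder α] [LocallyFiniteOrder α] (ρ : α → α → ℕ)
    (a : α → α → Polynomial ℤ) : α → α → Polynomial ℤ :=
  fun s t => ∑ w ∈ Finset.Icc s t, X ^ ρ s w * a w t

/-- `rk` witnesses that the finite bounded poset is graded: covering relations increase `rk`
by exactly one, `rk` is strictly monotone (automatic in the finite graded case), and `rk ⊥ = 0`. -/
structure GradedData [PartialOrder α] [BoundedOrder α] (rk : α → ℕ) : Prop where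
  cov : ∀ ⦃a b : α⦄, a ⋖ b → rk b = rk a + 1
  mono : StrictMono rk
  bot : rk (⊥ : α) = 0

/-- The weak rank function `ρ_{st} = rk t - rk s` induced by a rank function `rk`. -/
def rdiff (rk : α → ℕ) : α → α → ℕ := fun a b => rk b - rk a

end

noncomputable section

variable {α : Type*}

/-- A subtype of a finite partial order is a locally finite order. -/
noncomputable instance {β : Type*} [PartialOrder β] [Fintype β] {p : β → Prop} :
    LocallyFiniteOrder {x : β // p x} := by
  classical
  exact Fintype.toLocallyFiniteOrder

/-- The truncation `trunc([0̂,t])` of the interval `[0̂,t]`: all elements `w ≤ t` except the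
coatoms of the interval (the elements of rank `rk t - 1`). -/
abbrev Tr [Preorder α] (rk : α → ℕ) (t : α) : Type _ :=
  {w : α // w ≤ t ∧ rk w ≠ rk t - 1}

/-- The rank function of the truncation: ranks are preserved, except that the top element `t`
gets rank `rk t - 1`. -/
def trk [Preorder α] (rk : α → ℕ) (t : α) : Tr rk t → ℕ :=
  fun w => if (w : α) = t then rk t - 1 else rk (w : α)

end



noncomputable section

/-- The `x`-analogue `[n] = 1 + x + ⋯ + x^(n-1)` of the natural number `n`. -/
def geo (n : ℕ) : Polynomial ℤ := ∑ i ∈ Finset.range n, X ^ i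

lemma geo_mul (n : ℕ) : (X - 1) * geo n = X ^ n - 1 := by
  rw [geo, mul_comm, geom_sum_mul]

lemma geo_succ (n : ℕ) : geo (n + 1) = X * geo n + 1 := by
  simp only [geo, Finset.sum_range_succ', Finset.mul_sum, pow_succ']
  simp

lemma X_sub_one_ne : (X - 1 : Polynomial ℤ) ≠ 0 := by
  simpa using Polynomial.X_sub_C_ne_zero (1 : ℤ)

section Generic

variable {β : Type*} [PartialOrder β] [LocallyFiniteOrder β]

/-- Summation over pairs `v ≤ w` in `[b,t]`, in either order. -/
lemma sum_Icc_comm {M : Type*} [AddCommMonoid M] (b t : β) (f : β → β → M) :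
    ∑ w ∈ Finset.Icc b t, ∑ v ∈ Finset.Icc b w, f v w
      = ∑ v ∈ Finset.Icc b t, ∑ w ∈ Finset.Icc v t, f v w := by
  apply Finset.sum_comm'
  intro x y
  simp only [Finset.mem_Icc]
  constructor
  · rintro ⟨⟨h1, h2⟩, h3, h4⟩
    exact ⟨⟨h4, h2⟩, h3, h4.trans h2⟩
  · rintro ⟨⟨h1, h2⟩, h3, h4⟩
    exact ⟨⟨h3.trans h1, h2⟩, h3, h1⟩

/-- The division by `x - 1` in the reduced kernel is exact because `χ_{st}(1) = 0` for `s < t`. -/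
lemma red_chi_mul (r : β → ℕ) (mu : β → β → ℤ) (hmu : IsMobius mu) {s t : β} (hst : s ≤ t) :
    (X - 1) * red (chi (rdiff r) mu) s t
      = chi (rdiff r) mu s t - if s = t then X else 0 := by
  unfold red
  split_ifs with h
  · subst h
    simp [chi, rdiff, hmu.1]
  · have hlt : s < t := lt_of_le_of_ne hst h
    have hroot : (chi (rdiff r) mu s t).IsRoot 1 := by
      simp only [chi, Polynomial.IsRoot.def, Polynomial.eval_finsetSum]
      simpa using hmu.2.1 hlt
    have := Polynomial.mul_divByMonic_eq_iff_isRoot.mpr hroot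
    simpa using this

lemma sum_chi (r : β → ℕ) (mu : β → β → ℤ) (hmu : IsMobius mu) {v w : β} (hvw : v ≤ w) :
    ∑ u ∈ Finset.Icc v w, chi (rdiff r) mu u w = X ^ rdiff r v w := by
  unfold chi
  rw [← sum_Icc_comm v w (fun u y => Polynomial.C (mu u y) * X ^ rdiff r y w)]
  rw [Finset.sum_eq_single_of_mem v (by simp [hvw])]
  · simp [hmu.1]
  · intro y hy hne
    have hlt : v < y := lt_of_le_of_ne (Finset.mem_Icc.mp hy).1 (Ne.symm hne)
    rw [← Finset.sum_mul, ← map_sum, hmu.2.2 hlt]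
    simp

/-- The entries of `ζ·χ̄`; on the diagonal the value is `[0] - 1 = -1`. -/
lemma sum_red_chi (r : β → ℕ) (mu : β → β → ℤ) (hmu : IsMobius mu) {v w : β} (hvw : v ≤ w) :
    ∑ u ∈ Finset.Icc v w, red (chi (rdiff r) mu) u w = geo (rdiff r v w) - 1 := by
  apply mul_left_cancel₀ X_sub_one_ne
  rw [mul_sub, geo_mul, Finset.mul_sum]
  rw [Finset.sum_congr rfl fun u hu => red_chi_mul r mu hmu (Finset.mem_Icc.mp hu).2]
  rw [Finset.sum_sub_distrib, sum_chi r mu hmu hvw]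
  simp [Finset.sum_ite_eq', hvw]

/-- If `c = K·(-ζ·χ̄)` then `c·ℋ = K·ζ`. -/
lemma sum_mul_chow (r : β → ℕ) (mu : β → β → ℤ) (hmu : IsMobius mu)
    (H : β → β → Polynomial ℤ) (hH : IsChow (chi (rdiff r) mu) H) (b t : β)
    (c K : β → Polynomial ℤ)
    (hK : ∀ w, b ≤ w → w ≤ t → c w = ∑ v ∈ Finset.Icc b w, K v * (1 - geo (rdiff r v w))) :
    ∑ w ∈ Finset.Icc b t, c w * H w t = ∑ w ∈ Finset.Icc b t, K w := by
  have h1 : ∀ w ∈ Finset.Icc b t, c w * H w t = ∑ v ∈ Finset.Icc b w,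
      ∑ u ∈ Finset.Icc v w, -(K v * (red (chi (rdiff r) mu) u w * H w t)) := by
    intro w hw
    have hw := Finset.mem_Icc.mp hw
    rw [hK w hw.1 hw.2, Finset.sum_mul]
    refine Finset.sum_congr rfl fun v hv => ?_
    rw [Finset.sum_neg_distrib, ← Finset.mul_sum, ← Finset.sum_mul,
      sum_red_chi r mu hmu (Finset.mem_Icc.mp hv).2]
    ring
  rw [Finset.sum_congr rfl h1, sum_Icc_comm b t (fun v w =>
    ∑ u ∈ Finset.Icc v w, -(K v * (red (chi (rdiff r) mu) u w * H w t)))]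
  refine Finset.sum_congr rfl fun v hv => ?_
  have hv := Finset.mem_Icc.mp hv
  rw [sum_Icc_comm v t (fun u w => -(K v * (red (chi (rdiff r) mu) u w * H w t)))]
  have h2 : ∀ u ∈ Finset.Icc v t,
      ∑ w ∈ Finset.Icc u t, -(K v * (red (chi (rdiff r) mu) u w * H w t))
        = if u = t then K v else 0 := by
    intro u hu
    rw [Finset.sum_neg_distrib, ← Finset.mul_sum]
    have := hH.left (Finset.mem_Icc.mp hu).2
    unfold conv at this
    rw [this]
    unfold dlt
    split_ifs <;> simp
  rw [Finset.sum_congr rfl h2]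
  simp [Finset.sum_ite_eq', hv.2]

end Generic

/-- The system `c = K·(-ζ·χ̄)` is triangular, hence solvable for `K`. -/
lemma exists_solution {α : Type*} [PartialOrder α] [Fintype α] (r : α → ℕ)
    (c : α → Polynomial ℤ) :
    ∃ K : α → Polynomial ℤ, ∀ w,
      K w = c w + ∑ v ∈ Finset.univ.filter (· < w), K v * (geo (rdiff r v w) - 1) := by
  have wf : WellFounded ((· < ·) : α → α → Prop) := wellFounded_lt
  refine ⟨wf.fix fun w F => c w +
    ∑ v : α, if h : v < w then F v h * (geo (rdiff r v w) - 1) else 0, fun w => ?_⟩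
  rw [wf.fix_eq]
  congr 1
  rw [Finset.sum_filter]
  refine Finset.sum_congr rfl fun v _ => ?_
  split_ifs <;> rfl

lemma sum_le_eq {α : Type*} [PartialOrder α] [Fintype α] (w : α) (f : α → Polynomial ℤ) :
    ∑ v ∈ Finset.univ.filter (· ≤ w), f v = f w + ∑ v ∈ Finset.univ.filter (· < w), f v := by
  have : (Finset.univ.filter (· ≤ w) : Finset α) = insert w (Finset.univ.filter (· < w)) := by
    ext v
    simp [le_iff_eq_or_lt]
  rw [this, Finset.sum_insert (by simp)]

lemma solution_eq {α : Type*} [PartialOrder α] [Fintype α] (r : α → ℕ)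
    (c K : α → Polynomial ℤ) (w : α)
    (hK : K w = c w + ∑ v ∈ Finset.univ.filter (· < w), K v * (geo (rdiff r v w) - 1)) :
    c w = ∑ v ∈ Finset.univ.filter (· ≤ w), K v * (1 - geo (rdiff r v w)) := by
  rw [sum_le_eq, hK]
  have : ∑ v ∈ Finset.univ.filter (· < w), K v * (1 - geo (rdiff r v w))
      = - ∑ v ∈ Finset.univ.filter (· < w), K v * (geo (rdiff r v w) - 1) := by
    rw [← Finset.sum_neg_distrib]
    exact Finset.sum_congr rfl fun v _ => by ring
  rw [this]
  simp [rdiff, geo]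

lemma sum_Tr {α : Type*} [PartialOrder α] [Fintype α] (rk : α → ℕ) (t : α)
    (b : Tr rk t) (hb : IsBot b) (w : Tr rk t) (f : α → Polynomial ℤ) :
    ∑ v ∈ Finset.Icc b w, f v
      = ∑ v ∈ Finset.univ.filter (fun v => v ≤ (w : α) ∧ rk v ≠ rk t - 1), f v := by
  refine Finset.sum_bij (fun v _ => (v : α)) ?_ ?_ ?_ ?_
  · intro v hv
    have := (Finset.mem_Icc.mp hv).2
    simp only [Finset.mem_filter, Finset.mem_univ, true_and]
    exact ⟨this, v.2.2⟩
  · intro v _ v' _ h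
    exact Subtype.ext h
  · intro v hv
    simp only [Finset.mem_filter, Finset.mem_univ, true_and] at hv
    refine ⟨⟨v, hv.1.trans w.2.1, hv.2⟩, ?_, rfl⟩
    rw [Finset.mem_Icc]
    exact ⟨hb _, hv.1⟩
  · intro v _
    rfl

/-- The solution `K` of `c = K·(-ζ·χ̄)` on the whole poset is obtained at `t` from the Chow
function of the truncation of `[0̂,t]`. -/
lemma truncation_step {α : Type*} [PartialOrder α] [Fintype α]
    (rk : α → ℕ) (hmono : StrictMono rk) (t : α)
    (c K : α → Polynomial ℤ)
    (hK : ∀ w, K w = c w + ∑ v ∈ Finset.univ.filter (· < w), K v * (geo (rdiff rk v w) - 1))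
    (mu' : Tr rk t → Tr rk t → ℤ) (hmu : IsMobius mu')
    (H' : Tr rk t → Tr rk t → Polynomial ℤ) (hH : IsChow (chi (rdiff (trk rk t)) mu') H')
    (b : Tr rk t) (hb : IsBot b) (T : Tr rk t) (hT : (T : α) = t)
    (c' : α → Polynomial ℤ) (hc : ∀ w, w < t → c' w = c w) (hct : X * c' t = c t) :
    K t = X * ∑ w ∈ Finset.Icc b T, c' w * H' w T := by
  set S := Finset.univ.filter (fun v => v < t ∧ rk v ≠ rk t - 1) with hS
  set q : Polynomial ℤ := c' t + ∑ v ∈ S, K v * (geo (rk t - 1 - rk v) - 1) with hq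
  set K' : α → Polynomial ℤ := fun w => if w = t then q else K w with hK'
  have htop : (Finset.univ.filter (fun v => v ≤ t ∧ rk v ≠ rk t - 1) : Finset α)
      = insert t S := by
    ext v
    simp only [hS, Finset.mem_filter, Finset.mem_univ, true_and, Finset.mem_insert]
    constructor
    · rintro ⟨h1, h2⟩
      rcases h1.eq_or_lt with h | h
      · exact Or.inl h
      · exact Or.inr ⟨h, h2⟩
    · rintro (h | h)
      · have := T.2.2
        rw [hT] at this
        exact ⟨h.le, h ▸ this⟩
      · exact ⟨h.1.le, h.2⟩
  have htS : t ∉ S := by simp [hS]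
  have hK'S : ∀ v ∈ S, K' v = K v := by
    intro v hv
    have : v ≠ t := fun h => htS (h ▸ hv)
    simp [hK', this]
  have key := sum_mul_chow (trk rk t) mu' hmu H' hH b T (fun w => c' w) (fun w => K' w) ?_
  · rw [key, sum_Tr rk t b hb T K', hT, htop, Finset.sum_insert htS,
      Finset.sum_congr rfl hK'S]
    have hKt : K' t = q := by simp [hK']
    rw [hKt, hq, hK t, add_assoc, ← Finset.sum_add_distrib, mul_add, hct, Finset.mul_sum]
    congr 1
    have hsub : S ⊆ Finset.univ.filter (· < t) := by
      intro v hv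
      simp only [hS, Finset.mem_filter, Finset.mem_univ, true_and] at hv ⊢
      exact hv.1
    rw [← Finset.sum_subset hsub]
    · refine Finset.sum_congr rfl fun v hv => ?_
      simp only [hS, Finset.mem_filter, Finset.mem_univ, true_and] at hv
      have hlt := hmono hv.1
      have : rdiff rk v t = (rk t - 1 - rk v) + 1 := by unfold rdiff; omega
      rw [this, geo_succ]
      ring
    · -- coatoms contribute `[1] - 1 = 0`
      intro v hv hvS
      simp only [hS, Finset.mem_filter, Finset.mem_univ, true_and] at hv hvS
      have hlt := hmono hv
      have h1 : rk v = rk t - 1 := by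
        by_contra h
        exact hvS ⟨hv, h⟩
      have : rdiff rk v t = 1 := by unfold rdiff; omega
      simp [this, geo]
  · intro w _ _
    refine Eq.trans ?_ (sum_Tr rk t b hb w (fun v : α => K' v * (1 - geo
      ((if (w : α) = t then rk t - 1 else rk w) - (if v = t then rk t - 1 else rk v))))).symm
    by_cases hw : (w : α) = t
    · rw [hw, htop, Finset.sum_insert htS]
      have : ∀ v ∈ S, K' v * (1 - geo ((if t = t then rk t - 1 else rk t) -
              (if v = t then rk t - 1 else rk v)))
          = -(K v * (geo (rk t - 1 - rk v) - 1)) := by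
        intro v hv
        have hne : v ≠ t := fun h => htS (h ▸ hv)
        rw [hK'S v hv]
        simp only [if_true, if_neg hne]
        ring
      rw [Finset.sum_congr rfl this, Finset.sum_neg_distrib]
      simp [hK', hq, geo]
    · have hlt : (w : α) < t := lt_of_le_of_ne w.2.1 hw
      have hr := hmono hlt
      have hw2 := w.2.2
      have hset : (Finset.univ.filter (fun v => v ≤ (w : α) ∧ rk v ≠ rk t - 1) : Finset α)
          = Finset.univ.filter (· ≤ (w : α)) := by
        ext v
        simp only [Finset.mem_filter, Finset.mem_univ, true_and, and_iff_left_iff_imp]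
        intro h
        have := hmono.monotone h
        omega
      rw [hset, hc _ hlt, solution_eq rk c K w (hK w)]
      refine Finset.sum_congr rfl fun v hv => ?_
      simp only [Finset.mem_filter, Finset.mem_univ, true_and] at hv
      have hne : v ≠ t := (hv.trans_lt hlt).ne
      simp [hK', hne, hw, rdiff]

/-- Evaluation of `c·ℋ` on the whole poset. -/
lemma sum_mul_chow_top {α : Type*} [PartialOrder α] [BoundedOrder α] [Fintype α]
    [LocallyFiniteOrder α] (rk : α → ℕ) (mu : α → α → ℤ) (hmu : IsMobius mu)
    (H : α → α → Polynomial ℤ) (hH : IsChow (chi (rdiff rk) mu) H) (c K : α → Polynomial ℤ)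
    (hK : ∀ w, K w = c w + ∑ v ∈ Finset.univ.filter (· < w), K v * (geo (rdiff rk v w) - 1)) :
    ∑ w ∈ Finset.Icc ⊥ ⊤, c w * H w ⊤ = K ⊥ + ∑ w ∈ Finset.univ.filter (· ≠ (⊥ : α)), K w := by
  rw [sum_mul_chow rk mu hmu H hH ⊥ ⊤ c K]
  · have : (Finset.Icc ⊥ ⊤ : Finset α) = insert ⊥ (Finset.univ.filter (· ≠ (⊥ : α))) := by
      ext v
      simp [em]
    rw [this, Finset.sum_insert (by simp)]
  · intro w _ _
    rw [solution_eq rk c K w (hK w)]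
    refine Finset.sum_congr ?_ fun _ _ => rfl
    ext v
    simp

lemma solution_bot {α : Type*} [PartialOrder α] [BoundedOrder α] [Fintype α]
    (rk : α → ℕ) (c K : α → Polynomial ℤ)
    (hK : ∀ w, K w = c w + ∑ v ∈ Finset.univ.filter (· < w), K v * (geo (rdiff rk v w) - 1)) :
    K ⊥ = c ⊥ := by
  rw [hK ⊥]
  simp

/-- The minimum of the truncation has rank `0`, also when the truncation is a single point. -/
lemma trk_bot {α : Type*} [PartialOrder α] [BoundedOrder α] (rk : α → ℕ)
    (hg : GradedData rk) (t : α) (b : Tr rk t) (hb : IsBot b) : trk rk t b = 0 := by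
  unfold trk
  by_cases h1 : rk t - 1 = 0
  · split_ifs with h
    · exact h1
    · have := hg.mono (lt_of_le_of_ne b.2.1 h)
      have := b.2.2
      omega
  · have hle : b ≤ ⟨⊥, bot_le, by rw [hg.bot]; omega⟩ := hb _
    have hbot : (b : α) = ⊥ := le_bot_iff.mp hle
    have hne : (b : α) ≠ t := by
      intro h
      have := hg.bot
      rw [← hbot, h] at this
      omega
    rw [if_neg hne, hbot, hg.bot]

end

/-- Proposition 4.9 (Larson's recursions): for a finite graded bounded poset `P`,
`ℋ_P(x) = 1 + x Σ_{t : ρ(t) > 1} ℋ_{trunc([0̂,t])}(x)` and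
`G_P(x) = 1 + x Σ_{t ≠ 0̂} G_{trunc([0̂,t])}(x)`.  Here `HT t` (resp. `GT t`) is the `χ`-Chow
(resp. left `χ`-augmented Chow) polynomial of the truncation `trunc([0̂,t])`, characterized by
the existence of the Möbius function and Chow function of that truncated poset. -/
theorem larson_recursions {α : Type*}
    [PartialOrder α] [BoundedOrder α] [Fintype α] [LocallyFiniteOrder α]
    (rk : α → ℕ) (hg : GradedData rk)
    (mu : α → α → ℤ) (hmu : IsMobius mu)
    (H : α → α → Polynomial ℤ) (hH : IsChow (chi (rdiff rk) mu) H)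
    (HT GT : α → Polynomial ℤ)
    (hHT : ∀ (t : α) (ht : 1 < rk t),
      ∃ (mu' : Tr rk t → Tr rk t → ℤ) (H' : Tr rk t → Tr rk t → Polynomial ℤ) (b : Tr rk t),
        IsBot b ∧ IsMobius mu' ∧ IsChow (chi (rdiff (trk rk t)) mu') H' ∧
        HT t = H' b ⟨t, le_refl t, by omega⟩)
    (hGT : ∀ (t : α) (ht : t ≠ ⊥),
      ∃ (mu' : Tr rk t → Tr rk t → ℤ) (H' : Tr rk t → Tr rk t → Polynomial ℤ) (b : Tr rk t),
        IsBot b ∧ IsMobius mu' ∧ IsChow (chi (rdiff (trk rk t)) mu') H' ∧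
        GT t = zrevConv (rdiff (trk rk t)) H' b ⟨t, le_refl t, by
          have h1 := hg.mono (bot_lt_iff_ne_bot.mpr ht)
          have h2 := hg.bot
          omega⟩) :
    H ⊥ ⊤ = 1 + X * ∑ t ∈ Finset.univ.filter (fun t : α => 1 < rk t), HT t ∧
    zrevConv (rdiff rk) H ⊥ ⊤
      = 1 + X * ∑ t ∈ Finset.univ.filter (fun t : α => t ≠ ⊥), GT t := by
  constructor
  · obtain ⟨K, hK⟩ := exists_solution rk (fun w => if w = ⊥ then 1 else 0)
    have hsum := sum_mul_chow_top rk mu hmu H hH _ K hK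
    simp only [ite_mul, one_mul, zero_mul, Finset.sum_ite_eq', Finset.mem_Icc, le_refl,
      bot_le, and_self, if_true] at hsum
    rw [hsum, solution_bot rk _ K hK, if_pos rfl, Finset.mul_sum]
    congr 1
    have hsub : Finset.univ.filter (fun t : α => 1 < rk t)
        ⊆ Finset.univ.filter (· ≠ (⊥ : α)) := by
      intro v hv
      simp only [Finset.mem_filter, Finset.mem_univ, true_and] at hv ⊢
      rintro rfl
      rw [hg.bot] at hv
      omega
    rw [← Finset.sum_subset hsub]
    · refine Finset.sum_congr rfl fun t ht => ?_
      simp only [Finset.mem_filter, Finset.mem_univ, true_and] at ht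
      obtain ⟨mu', H', b, hb, hmu', hH', e⟩ := hHT t ht
      have hle : b ≤ ⟨⊥, bot_le, by rw [hg.bot]; omega⟩ := hb _
      have hbot : (b : α) = ⊥ := le_bot_iff.mp hle
      have htne : t ≠ ⊥ := by
        rintro rfl
        rw [hg.bot] at ht
        omega
      rw [truncation_step rk hg.mono t _ K hK mu' hmu' H' hH' b hb ⟨t, le_refl t, by omega⟩ rfl
        (fun w => if w = ⊥ then 1 else 0) (fun _ _ => rfl) (by simp [htne]), e]
      congr 1
      rw [Finset.sum_eq_single_of_mem b (Finset.mem_Icc.mpr ⟨le_refl b, hb _⟩)]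
      · simp [hbot]
      · intro w _ hne
        have : (w : α) ≠ ⊥ := fun h => hne (Subtype.ext (h.trans hbot.symm))
        simp [this]
    · -- at an atom `t` every coefficient `[ρ_{vt}] - 1` with `v < t` vanishes
      intro t ht ht'
      simp only [Finset.mem_filter, Finset.mem_univ, true_and] at ht ht'
      rw [hK t, if_neg ht, zero_add]
      refine Finset.sum_eq_zero fun v hv => ?_
      simp only [Finset.mem_filter, Finset.mem_univ, true_and] at hv
      have hlt := hg.mono hv
      have : rdiff rk v t = 1 := by unfold rdiff; omega
      simp [this, geo]
  · obtain ⟨K, hK⟩ := exists_solution rk (fun w => X ^ rk w)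
    have hsum := sum_mul_chow_top rk mu hmu H hH _ K hK
    have hz : zrevConv (rdiff rk) H ⊥ ⊤ = ∑ w ∈ Finset.Icc ⊥ ⊤, X ^ rk w * H w ⊤ := by
      simp [zrevConv, rdiff, hg.bot]
    rw [hz, hsum, solution_bot rk _ K hK, hg.bot, pow_zero, Finset.mul_sum]
    congr 1
    refine Finset.sum_congr rfl fun t ht => ?_
    simp only [Finset.mem_filter, Finset.mem_univ, true_and] at ht
    obtain ⟨mu', H', b, hb, hmu', hH', e⟩ := hGT t ht
    have h1 := hg.mono (bot_lt_iff_ne_bot.mpr ht)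
    have h2 := hg.bot
    rw [truncation_step rk hg.mono t _ K hK mu' hmu' H' hH' b hb ⟨t, le_refl t, by omega⟩ rfl
      (fun w => X ^ (if w = t then rk t - 1 else rk w)) (fun w hw => by simp [hw.ne])
      (by simp only [if_true]; rw [← pow_succ']; congr 1; omega), e]
    congr 1
    unfold zrevConv
    refine Finset.sum_congr rfl fun w _ => ?_
    simp only [rdiff, trk_bot rk hg t b hb, Nat.sub_zero]
    rfl
end

section
/- Let P be a finite graded bounded poset of rank r, with flag h-vector β_P, and let ℋ_P(x) be its χ-Chow polynomial, which is symmetric with center of symmetry (r−1)/2. Then its γ-polynomial satisfies γ(ℋ_P, x) = Σ_{S ⊆ {1,…,r−1}, S good} β_P(S)·x^{|S|}, where a set S of integers is good if 1 ∉ S and S contains no two consecutive integers. Consequently, if the flag h-vector of P is non-negative (in particular if P is Cohen–Macaulay), then ℋ_P(x) is γ-positive. -/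
/-!
Multiplying `χ̄ ℋ = -δ` on the left by `ζ` replaces `χ̄` by the explicit function
`(ζ χ̄)_{st} = (x^{ρ_{st}} - x)/(x - 1)`, since `ζ χ = ζ^rev` (`sum_red`, `chow_rec`). Inverting it
expands the Chow polynomial over chains `⊥ < w₁ < ⋯ < w_k < ⊤`: with `t_i` the rank of `w_i`,
`t₀ = 0` and `[k] = 1 + ⋯ + x^{k-1}`, a chain contributes
`∏ x[t_i - t_{i-1} - 1] · [r - t_k]` (`chow_eq_sum_chains`). This weight depends only on the set `T`
of ranks, so `ℋ_P = ∑_T α_P(T) w(T)` (`chow_eq_sum_flagF`).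

Let `F(S) = ∏ x(1+x)^{s_i - s_{i-1} - 2} · (1+x)^{r - 1 - s_k}`, where a factor whose gap is `1` is
read as `0`. Then `F(S) = x^{|S|} (1+x)^{r-1-2|S|}` if `S` is good and `F(S) = 0` otherwise
(`gapWt_gamGap`), and `w(T) = ∑_{S ⊇ T} (-1)^{|S∖T|} F(S)` (`sgnSum_gapWt`, by induction on `r`
from `[k+2] = (1+x)[k+1] - x[k]`). Substituting the definition of `β_P` and exchanging sums gives
`∑_S β_P(S) F(S) = ∑_T α_P(T) w(T) = ℋ_P`.
-/

open Finset Polynomial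
open scoped Classical

noncomputable section

variable {α : Type*}

/-- The flag `f`-vector of a finite ranked poset: `α_P(S)` is the number of chains whose set of
ranks is exactly `S`. -/
def flagF [PartialOrder α] [Fintype α] (rk : α → ℕ) (S : Finset ℕ) : ℕ :=
  (Finset.univ.filter
      (fun C : Finset α => IsChain (· ≤ ·) (C : Set α) ∧ C.image rk = S)).card

/-- The flag `h`-vector of a finite ranked poset:
`β_P(S) = Σ_{T ⊆ S} (-1)^{|S∖T|} α_P(T)`. -/
def flagH [PartialOrder α] [Fintype α] (rk : α → ℕ) (S : Finset ℕ) : ℤ :=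
  ∑ T ∈ S.powerset, (-1) ^ (S.card - T.card) * (flagF rk T : ℤ)

end

noncomputable section

/-! ### Weights of finite sets of ranks -/

/-- The multiplicative weight of a finite set `T = {t₁ < ⋯ < t_k}` of positive integers attached to
a gap weight `c`: the product `∏ c (t_i - t_{i-1})`, with the convention `t₀ = 0` (which is the
value of `Finset.sup` on the empty set). -/
def gapWt (c : ℕ → ℤ[X]) (T : Finset ℕ) : ℤ[X] :=
  ∏ t ∈ T, c (t - (T.filter (fun u => u < t)).sup id)

/-- The `q`-integer `[k] = 1 + x + ⋯ + x^{k-1}`. -/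
def qint (k : ℕ) : ℤ[X] := ∑ i ∈ range k, X ^ i

/-- The gap weight `x + x² + ⋯ + x^{k-1}` occurring in the chain expansion of the Chow function. -/
def chowGap (k : ℕ) : ℤ[X] := X * qint (k - 1)

/-- The gap weight `x (1+x)^{k-2}`, understood as `0` for gaps `k ≤ 1`. -/
def gamGap (k : ℕ) : ℤ[X] := if k ≤ 1 then 0 else X * (1 + X) ^ (k - 2)

/-- The sets that index the `γ`-expansion: `1 ∉ S` and no two consecutive elements. -/
def Good (S : Finset ℕ) : Prop := 1 ∉ S ∧ ∀ i ∈ S, i + 1 ∉ S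

lemma gapWt_empty (c : ℕ → ℤ[X]) : gapWt c ∅ = 1 := by simp [gapWt]

lemma gapWt_insert (c : ℕ → ℤ[X]) (T : Finset ℕ) (m : ℕ) (h : ∀ x ∈ T, x < m) :
    gapWt c (insert m T) = gapWt c T * c (m - T.sup id) := by
  have hm : m ∉ T := fun h' => lt_irrefl _ (h m h')
  unfold gapWt
  rw [prod_insert hm, mul_comm]
  congr 1
  · refine prod_congr rfl fun t ht => ?_
    rw [filter_insert, if_neg (not_lt.2 (h t ht).le)]
  · rw [filter_insert, if_neg (lt_irrefl m), filter_true_of_mem h]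

lemma sup_insert_max (T : Finset ℕ) (m : ℕ) (h : ∀ x ∈ T, x < m) :
    (insert m T).sup id = m := by
  rw [sup_insert]
  exact sup_eq_left.2 (Finset.sup_le fun x hx => (h x hx).le)

lemma qint_succ (k : ℕ) : qint (k + 1) = 1 + X * qint k := by
  unfold qint
  rw [sum_range_succ', mul_sum, add_comm]
  simp [pow_succ']

lemma qint_three (k : ℕ) : qint (k + 2) = (1 + X) * qint (k + 1) - X * qint k := by
  rw [qint_succ (k + 1), qint_succ k]; ring

lemma sub_one_mul_chowGap (k : ℕ) (hk : 1 ≤ k) : (X - 1) * chowGap k = X ^ k - X := by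
  obtain ⟨j, rfl⟩ := Nat.exists_eq_add_of_le' hk
  have := mul_geom_sum (X : ℤ[X]) j
  unfold chowGap qint
  simp only [Nat.add_sub_cancel]
  rw [mul_left_comm, this]; ring

/-- The sum of `φ` over `{S : T ⊆ S ⊆ {1,…,n}}`, signed by `(-1)^{|S∖T|}`. -/
def sgnSum (n : ℕ) (T : Finset ℕ) (φ : Finset ℕ → ℤ[X]) : ℤ[X] :=
  ∑ S ∈ (Icc 1 n).powerset, if T ⊆ S then (-1) ^ (S.card - T.card) * φ S else 0

lemma Icc_one_succ (n : ℕ) : Icc 1 (n + 1) = insert (n + 1) (Icc 1 n) := by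
  ext x; simp; omega

lemma sgnSum_succ_notMem (n : ℕ) (T : Finset ℕ) (hT : T ⊆ Icc 1 n) (φ : Finset ℕ → ℤ[X]) :
    sgnSum (n + 1) T φ = sgnSum n T φ - sgnSum n T (fun S => φ (insert (n + 1) S)) := by
  have hn : n + 1 ∉ Icc 1 n := by simp
  unfold sgnSum
  rw [Icc_one_succ, sum_powerset_insert hn, sub_eq_add_neg, ← sum_neg_distrib]
  congr 1
  refine sum_congr rfl fun S hS => ?_
  have hnS : n + 1 ∉ S := fun h => hn (mem_powerset.1 hS h)
  have hnT : n + 1 ∉ T := fun h => hn (hT h)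
  have : T ⊆ insert (n + 1) S ↔ T ⊆ S := subset_insert_iff_of_notMem hnT
  simp only [this]
  split_ifs with h
  · rw [card_insert_of_notMem hnS, Nat.succ_sub (card_le_card h), pow_succ]; ring
  · simp

lemma sgnSum_succ_mem (n : ℕ) (T : Finset ℕ) (hT : T ⊆ Icc 1 n) (φ : Finset ℕ → ℤ[X]) :
    sgnSum (n + 1) (insert (n + 1) T) φ = sgnSum n T (fun S => φ (insert (n + 1) S)) := by
  have hn : n + 1 ∉ Icc 1 n := by simp
  have hnT : n + 1 ∉ T := fun h => hn (hT h)
  unfold sgnSum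
  rw [Icc_one_succ, sum_powerset_insert hn, sum_eq_zero, zero_add]
  · refine sum_congr rfl fun S hS => ?_
    have hnS : n + 1 ∉ S := fun h => hn (mem_powerset.1 hS h)
    have : insert (n + 1) T ⊆ insert (n + 1) S ↔ T ⊆ S := by
      rw [insert_subset_insert_iff hnT]
    simp only [this, card_insert_of_notMem hnS, card_insert_of_notMem hnT, Nat.add_sub_add_right]
  · intro S hS
    rw [if_neg]
    intro h
    exact hn (mem_powerset.1 hS (h (mem_insert_self _ _)))

lemma sgnSum_congr (n : ℕ) (T : Finset ℕ) (φ ψ : Finset ℕ → ℤ[X])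
    (h : ∀ S ⊆ Icc 1 n, φ S = ψ S) : sgnSum n T φ = sgnSum n T ψ := by
  unfold sgnSum
  refine sum_congr rfl fun S hS => ?_
  rw [h S (mem_powerset.1 hS)]

lemma sgnSum_mul (n : ℕ) (T : Finset ℕ) (p : ℤ[X]) (φ : Finset ℕ → ℤ[X]) :
    sgnSum n T (fun S => p * φ S) = p * sgnSum n T φ := by
  unfold sgnSum
  rw [mul_sum]
  refine sum_congr rfl fun S _ => ?_
  split_ifs <;> ring

lemma sup_le_of_subset_Icc {n : ℕ} {S : Finset ℕ} (hS : S ⊆ Icc 1 n) : S.sup id ≤ n :=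
  Finset.sup_le fun _ hx => (mem_Icc.1 (hS hx)).2

lemma lt_of_subset_Icc {n : ℕ} {S : Finset ℕ} (hS : S ⊆ Icc 1 n) : ∀ x ∈ S, x < n + 1 :=
  fun _ hx => Nat.lt_succ_of_le (mem_Icc.1 (hS hx)).2

/-- Möbius inversion of the weights: the signed sums over supersets of the weights
`∏ x(1+x)^{gap-2} · (1+x)^{n - max}` give back the weights `∏ (x+⋯+x^{gap-1}) · [n + 1 - max]`.
The induction on `n` needs the companion identity in which the last gap also carries the
weight `gamGap`, resp. `chowGap`. -/
lemma sgnSum_gapWt (n : ℕ) : ∀ T ⊆ Icc 1 n,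
    sgnSum n T (fun S => gapWt gamGap S * (1 + X) ^ (n - S.sup id))
        = gapWt chowGap T * qint (n + 1 - T.sup id) ∧
      sgnSum n T (fun S => gapWt gamGap S * gamGap (n + 1 - S.sup id))
        = gapWt chowGap T * chowGap (n + 1 - T.sup id) := by
  induction n with
  | zero =>
    intro T hT
    have : T = ∅ := by simpa using hT
    subst this
    simp [sgnSum, gapWt_empty, qint, gamGap, chowGap]
  | succ n ih =>
    intro T hT
    -- the effect of `S ↦ insert (n + 1) S` on the two summands
    have e1 : ∀ S ⊆ Icc 1 n, gapWt gamGap (insert (n + 1) S) *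
        (1 + X) ^ (n + 1 - (insert (n + 1) S).sup id)
          = gapWt gamGap S * gamGap (n + 1 - S.sup id) := fun S hS => by
      rw [gapWt_insert _ _ _ (lt_of_subset_Icc hS), sup_insert_max _ _ (lt_of_subset_Icc hS)]
      simp
    have e2 : ∀ S ⊆ Icc 1 n, gapWt gamGap (insert (n + 1) S) *
        gamGap (n + 1 + 1 - (insert (n + 1) S).sup id) = 0 * 0 := fun S hS => by
      rw [sup_insert_max _ _ (lt_of_subset_Icc hS)]
      simp [gamGap]
    by_cases hm : n + 1 ∈ T
    · obtain ⟨T', hT', rfl⟩ : ∃ T' ⊆ Icc 1 n, T = insert (n + 1) T' := by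
        refine ⟨T.erase (n + 1), ?_, (insert_erase hm).symm⟩
        rw [← subset_insert_iff, ← Icc_one_succ]; exact hT
      rw [sgnSum_succ_mem n T' hT', sgnSum_succ_mem n T' hT', sgnSum_congr _ _ _ _ e1,
        sgnSum_congr _ _ _ _ e2, (ih T' hT').2, gapWt_insert _ _ _ (lt_of_subset_Icc hT'),
        sup_insert_max _ _ (lt_of_subset_Icc hT'), sgnSum_mul]
      simp [qint, chowGap]
    · have hT' : T ⊆ Icc 1 n := by
        rwa [Icc_one_succ, subset_insert_iff_of_notMem hm] at hT
      have f1 : ∀ S ⊆ Icc 1 n, gapWt gamGap S * (1 + X) ^ (n + 1 - S.sup id)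
          = (1 + X) * (gapWt gamGap S * (1 + X) ^ (n - S.sup id)) := fun S hS => by
        rw [Nat.succ_sub (sup_le_of_subset_Icc hS), pow_succ]; ring
      have f2 : ∀ S ⊆ Icc 1 n, gapWt gamGap S * gamGap (n + 1 + 1 - S.sup id)
          = X * (gapWt gamGap S * (1 + X) ^ (n - S.sup id)) := fun S hS => by
        have := sup_le_of_subset_Icc hS
        unfold gamGap
        rw [if_neg (by omega), show n + 1 + 1 - S.sup id - 2 = n - S.sup id by omega]; ring
      obtain ⟨k, hk⟩ := Nat.exists_eq_add_of_le (sup_le_of_subset_Icc hT')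
      rw [sgnSum_succ_notMem n T hT', sgnSum_succ_notMem n T hT', sgnSum_congr _ _ _ _ e1,
        sgnSum_congr _ _ _ _ e2, sgnSum_congr _ _ _ _ f1, sgnSum_congr _ _ _ _ f2, sgnSum_mul,
        sgnSum_mul, sgnSum_mul, (ih T hT').1, (ih T hT').2,
        show n + 1 - T.sup id = k + 1 by omega, show n + 1 + 1 - T.sup id = k + 2 by omega,
        qint_three k]
      constructor
      · simp only [chowGap, Nat.add_sub_cancel]; ring
      · simp only [chowGap, show k + 2 - 1 = k + 1 by omega]; ring

lemma good_insert (S : Finset ℕ) (m : ℕ) (hm : 1 ≤ m) (h0 : 0 ∉ S) (h : ∀ x ∈ S, x < m) :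
    Good (insert m S) ↔ Good S ∧ 2 ≤ m - S.sup id := by
  have hle : ∀ x ∈ S, x ≤ S.sup id := fun x hx => le_sup (f := id) hx
  have hmem : S.Nonempty → S.sup id ∈ S := fun hS => by
    obtain ⟨x, hx, e⟩ := exists_mem_eq_sup S hS id
    rw [e]; exact hx
  unfold Good
  simp only [mem_insert, not_or, forall_eq_or_imp]
  constructor
  · rintro ⟨⟨h1, h2⟩, h3, h4⟩
    refine ⟨⟨h2, fun i hi => (h4 i hi).2⟩, ?_⟩
    rcases S.eq_empty_or_nonempty with rfl | hS
    · simp; omega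
    · have := h _ (hmem hS)
      have := (h4 _ (hmem hS)).1
      omega
  · rintro ⟨⟨h1, h2⟩, h3⟩
    refine ⟨⟨by omega, h1⟩, ⟨by omega, fun hx => ?_⟩, fun i hi => ⟨?_, h2 i hi⟩⟩
    · have := h _ hx; omega
    · have := hle i hi; omega

/-- Closed form of the `gamGap` weight; a set with a gap equal to `1` has weight `0`. -/
lemma gapWt_gamGap (S : Finset ℕ) : 0 ∉ S →
    (Good S → 2 * S.card ≤ S.sup id) ∧
    gapWt gamGap S = if Good S then X ^ S.card * (1 + X) ^ (S.sup id - 2 * S.card) else 0 := by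
  induction S using Finset.induction_on_max with
  | empty => intro _; simp [gapWt_empty, Good]
  | insert m S h ih =>
    intro h0
    have hm : 1 ≤ m := by
      rcases Nat.eq_zero_or_pos m with rfl | h'
      · simp at h0
      · exact h'
    have h0' : 0 ∉ S := fun h' => h0 (mem_insert_of_mem h')
    have hmS : m ∉ S := fun h' => lt_irrefl _ (h m h')
    obtain ⟨ih1, ih2⟩ := ih h0'
    rw [gapWt_insert _ _ _ h, sup_insert_max _ _ h, card_insert_of_notMem hmS, ih2,
      good_insert S m hm h0' h]
    refine ⟨fun hg => ?_, ?_⟩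
    · have := ih1 hg.1; omega
    · by_cases hg : Good S
      · have h1 := ih1 hg
        by_cases h2 : 2 ≤ m - S.sup id
        · rw [if_pos hg, if_pos ⟨hg, h2⟩, gamGap, if_neg (by omega),
            show m - 2 * (S.card + 1) = (S.sup id - 2 * S.card) + (m - S.sup id - 2) by omega,
            pow_add, pow_succ]
          ring
        · rw [if_pos hg, if_neg (fun h => h2 h.2), gamGap, if_pos (by omega), mul_zero]
      · rw [if_neg hg, if_neg (fun h => hg h.1), zero_mul]

/-! ### Sums over chains -/

variable {α : Type*}

/-- The chains of a poset contained in a finite set `D`. -/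
def chainsIn [PartialOrder α] (D : Finset α) : Finset (Finset α) :=
  D.powerset.filter (fun C => IsChain (· ≤ ·) (C : Set α))

/-- Nonempty chains are classified by their largest element. -/
lemma sum_chainsIn [PartialOrder α] (D : Finset α) (φ : Finset α → ℤ[X]) :
    ∑ C ∈ chainsIn D, φ C
      = φ ∅ + ∑ w ∈ D, ∑ C ∈ chainsIn (D.filter (fun u => u < w)), φ (insert w C) := by
  have h0 : (∅ : Finset α) ∈ chainsIn D := by simp [chainsIn]
  rw [← add_sum_erase _ _ h0, sum_sigma']
  congr 1
  symm
  refine sum_bij (fun p _ => insert p.1 p.2) ?_ ?_ ?_ ?_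
  · rintro ⟨w, C⟩ hp
    simp only [mem_sigma, chainsIn, mem_filter, mem_powerset, mem_erase] at hp ⊢
    obtain ⟨hw, hC, hch⟩ := hp
    refine ⟨insert_ne_empty _ _, insert_subset hw (hC.trans (filter_subset _ _)), ?_⟩
    rw [coe_insert]
    exact hch.insert fun b hb _ => Or.inr (mem_filter.1 (hC hb)).2.le
  · rintro ⟨w, C⟩ hp ⟨w', C'⟩ hp' he
    simp only [mem_sigma, chainsIn, mem_filter, mem_powerset] at hp hp' he
    have hlt : ∀ x ∈ C, x < w := fun x hx => (mem_filter.1 (hp.2.1 hx)).2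
    have hlt' : ∀ x ∈ C', x < w' := fun x hx => (mem_filter.1 (hp'.2.1 hx)).2
    have hw : w = w' := by
      have h1 : w ∈ insert w' C' := he ▸ mem_insert_self _ _
      have h2 : w' ∈ insert w C := he ▸ mem_insert_self _ _
      rcases mem_insert.1 h1 with h | h
      · exact h
      rcases mem_insert.1 h2 with h' | h'
      · exact h'.symm
      · exact absurd ((hlt' _ h).trans (hlt _ h')) (lt_irrefl _)
    subst hw
    have n1 : w ∉ C := fun h => lt_irrefl _ (hlt w h)
    have n2 : w ∉ C' := fun h => lt_irrefl _ (hlt' w h)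
    rw [← erase_insert n1, he, erase_insert n2]
  · intro C hC
    simp only [chainsIn, mem_filter, mem_powerset, mem_erase] at hC
    obtain ⟨hne, hD, hch⟩ := hC
    obtain ⟨w, hw, hmax⟩ := C.exists_maximal (nonempty_iff_ne_empty.2 hne)
    refine ⟨⟨w, C.erase w⟩, ?_, insert_erase hw⟩
    simp only [mem_sigma, chainsIn, mem_filter, mem_powerset]
    refine ⟨hD hw, fun x hx => ?_, hch.mono (by simp)⟩
    obtain ⟨hxw, hx⟩ := mem_erase.1 hx
    refine mem_filter.2 ⟨hD hx, lt_of_le_of_ne ?_ hxw⟩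
    rcases hch hx hw hxw with h | h
    · exact h
    · exact hmax hx h
  · intros; rfl

/-! ### The chain expansion of the Chow polynomial -/

section Chow

variable [PartialOrder α] [BoundedOrder α] [LocallyFiniteOrder α]

lemma filter_lt_Ioo {w u : α} (hw : w ∈ Ioo ⊥ u) :
    (Ioo ⊥ u).filter (fun v => v < w) = Ioo ⊥ w := by
  ext v
  simp only [mem_filter, mem_Ioo] at hw ⊢
  exact ⟨fun h => ⟨h.1.1, h.2⟩, fun h => ⟨⟨h.1, h.2.trans hw.2⟩, h.2⟩⟩

/-- The total `chowGap`-weight of the chains in `(⊥, u]` with largest element `u`, and `1` for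
`u = ⊥`. -/
def chainSum (rk : α → ℕ) (u : α) : ℤ[X] :=
  if u = ⊥ then 1 else ∑ C ∈ chainsIn (Ioo ⊥ u), gapWt chowGap ((insert u C).image rk)

lemma gapWt_image_insert {rk : α → ℕ} (hmono : StrictMono rk) {u : α} {C : Finset α}
    (hC : C ∈ chainsIn (Ioo ⊥ u)) :
    (∀ x ∈ C.image rk, x < rk u) ∧ gapWt chowGap ((insert u C).image rk)
      = gapWt chowGap (C.image rk) * chowGap (rk u - (C.image rk).sup id) := by
  have h : ∀ x ∈ C.image rk, x < rk u := by
    intro x hx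
    obtain ⟨v, hv, rfl⟩ := mem_image.1 hx
    exact hmono (mem_Ioo.1 ((mem_powerset.1 (mem_filter.1 hC).1) hv)).2
  exact ⟨h, by rw [image_insert, gapWt_insert _ _ _ h]⟩

lemma sum_chainsIn_Ioo {rk : α → ℕ} (hmono : StrictMono rk) (u : α) (q : ℕ → ℤ[X]) :
    ∑ C ∈ chainsIn (Ioo ⊥ u), gapWt chowGap (C.image rk) * q ((C.image rk).sup id)
      = q 0 + ∑ w ∈ Ioo ⊥ u, chainSum rk w * q (rk w) := by
  rw [sum_chainsIn]
  congr 1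
  · simp [gapWt_empty]
  · refine sum_congr rfl fun w hw => ?_
    rw [filter_lt_Ioo hw, chainSum, if_neg (mem_Ioo.1 hw).1.ne', sum_mul]
    refine sum_congr rfl fun C hC => ?_
    congr 2
    rw [image_insert, sup_insert_max _ _ (gapWt_image_insert hmono hC).1]

lemma chainSum_rec {rk : α → ℕ} (hg : GradedData rk) (u : α) (hu : u ≠ ⊥) :
    chainSum rk u = ∑ w ∈ Ico ⊥ u, chainSum rk w * chowGap (rk u - rk w) := by
  rw [← Ioo_insert_left (bot_lt_iff_ne_bot.2 hu), sum_insert (by simp)]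
  have := sum_chainsIn_Ioo hg.mono u (fun k => chowGap (rk u - k))
  simp only [Nat.sub_zero] at this
  rw [hg.bot, Nat.sub_zero]
  conv_rhs => rw [chainSum, if_pos rfl, one_mul, ← this]
  rw [chainSum, if_neg hu]
  exact sum_congr rfl fun C hC => (gapWt_image_insert hg.mono hC).2

/-- The entries of `ζ·χ̄`. -/
lemma sum_red {rk : α → ℕ} (hg : GradedData rk) {mu : α → α → ℤ} (hmu : IsMobius mu)
    (s u : α) (hsu : s ≤ u) :
    ∑ w ∈ Icc s u, red (chi (rdiff rk) mu) w u
      = if s = u then -1 else chowGap (rk u - rk s) := by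
  obtain ⟨hm1, hm2, hm3⟩ := hmu
  split_ifs with hs
  · subst hs; simp [red]
  have hlt : s < u := lt_of_le_of_ne hsu hs
  have hne : (X - 1 : ℤ[X]) ≠ 0 := by simpa using X_sub_C_ne_zero (1 : ℤ)
  apply mul_left_cancel₀ hne
  rw [sub_one_mul_chowGap _ (by have := hg.mono hlt; omega), mul_sum]
  -- `(x-1) χ̄ = χ - x δ`, because `χ_{wu}(1) = ∑ μ_{wv} = 0` for `w < u`
  have key : ∀ w ∈ Icc s u, (X - 1) * red (chi (rdiff rk) mu) w u
      = chi (rdiff rk) mu w u - if w = u then X else 0 := by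
    intro w hw
    by_cases hwu : w = u
    · subst hwu; simp [red, chi, hm1, rdiff]
    · have hroot : (chi (rdiff rk) mu w u).IsRoot 1 := by
        have := hm2 (lt_of_le_of_ne (mem_Icc.1 hw).2 hwu)
        simpa [chi, IsRoot, eval_finsetSum] using this
      have h2 := mul_divByMonic_eq_iff_isRoot.2 hroot
      rw [red, if_neg hwu, if_neg hwu, sub_zero]
      simpa using h2
  rw [sum_congr rfl key, sum_sub_distrib, sum_ite_eq', if_pos (right_mem_Icc.2 hsu)]
  congr 1
  have hsw : ∑ w ∈ Icc s u, chi (rdiff rk) mu w u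
      = ∑ v ∈ Icc s u, ∑ w ∈ Icc s v, C (mu w v) * X ^ rdiff rk v u := by
    unfold chi
    refine sum_comm' fun w v => ?_
    simp only [mem_Icc]
    exact ⟨fun h => ⟨⟨h.1.1, h.2.1⟩, h.1.1.trans h.2.1, h.2.2⟩,
      fun h => ⟨⟨h.1.1, h.1.2.trans h.2.2⟩, h.1.2, h.2.2⟩⟩
  rw [hsw, sum_eq_single s]
  · simp [hm1, rdiff]
  · intro v hv hvs
    rw [← sum_mul, ← map_sum, hm3 (lt_of_le_of_ne (mem_Icc.1 hv).1 (Ne.symm hvs))]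
    simp
  · intro h; exact absurd (left_mem_Icc.2 hsu) h

/-- Multiplying `χ̄ ℋ = -δ` by `ζ` on the left. -/
lemma chow_rec {rk : α → ℕ} (hg : GradedData rk) {mu : α → α → ℤ} (hmu : IsMobius mu)
    {H : α → α → ℤ[X]} (hH : IsChow (chi (rdiff rk) mu) H) (s : α) :
    ∑ u ∈ Ici s, (if s = u then 1 else - chowGap (rk u - rk s)) * H u ⊤ = 1 := by
  have h1 : ∑ v ∈ Icc s ⊤, conv (red (chi (rdiff rk) mu)) H v ⊤ = -1 := by
    rw [sum_congr rfl fun v hv => hH.left (le_top : v ≤ ⊤), sum_neg_distrib]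
    simp [dlt]
  have h2 : ∑ v ∈ Icc s ⊤, conv (red (chi (rdiff rk) mu)) H v ⊤
      = ∑ u ∈ Icc s ⊤, ∑ v ∈ Icc s u, red (chi (rdiff rk) mu) v u * H u ⊤ := by
    unfold conv
    refine sum_comm' fun v u => ?_
    simp only [mem_Icc, le_top, and_true]
    exact ⟨fun h => ⟨⟨h.1, h.2⟩, h.1.trans h.2⟩, fun h => ⟨h.1.1, h.1.2⟩⟩
  rw [← neg_inj, ← h1, h2, ← Icc_top, ← sum_neg_distrib]
  refine sum_congr rfl fun u hu => ?_
  rw [← sum_mul, sum_red hg hmu s u (mem_Icc.1 hu).1]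
  split_ifs <;> ring

variable [Fintype α]

lemma chow_eq_sum_chainSum {rk : α → ℕ} (hg : GradedData rk) {mu : α → α → ℤ} (hmu : IsMobius mu)
    {H : α → α → ℤ[X]} (hH : IsChow (chi (rdiff rk) mu) H) :
    H ⊥ ⊤ = ∑ w, chainSum rk w := by
  symm
  calc ∑ w, chainSum rk w
      = ∑ w, ∑ u ∈ Ici w, chainSum rk w *
          ((if w = u then 1 else - chowGap (rk u - rk w)) * H u ⊤) := by
        refine sum_congr rfl fun w _ => ?_
        rw [← mul_sum, chow_rec hg hmu hH, mul_one]
    _ = ∑ u, ∑ w ∈ Icc ⊥ u, chainSum rk w *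
          ((if w = u then 1 else - chowGap (rk u - rk w)) * H u ⊤) := by
        refine sum_comm' fun w u => ?_
        simp
    _ = ∑ u, if u = ⊥ then H u ⊤ else 0 := by
        refine sum_congr rfl fun u _ => ?_
        rw [← Ico_insert_right (bot_le : ⊥ ≤ u), sum_insert (by simp), if_pos rfl]
        have h1 : ∑ w ∈ Ico ⊥ u, chainSum rk w *
            ((if w = u then 1 else - chowGap (rk u - rk w)) * H u ⊤)
            = - ((∑ w ∈ Ico ⊥ u, chainSum rk w * chowGap (rk u - rk w)) * H u ⊤) := by
          rw [sum_mul, ← sum_neg_distrib]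
          refine sum_congr rfl fun w hw => ?_
          rw [if_neg (mem_Ico.1 hw).2.ne]; ring
        rw [h1]
        split_ifs with hu
        · subst hu; simp [chainSum]
        · rw [← chainSum_rec hg u hu]; ring
    _ = H ⊥ ⊤ := by simp

/-- The chain expansion, over the chains of the proper part; including or
omitting `⊤` turns the last factor into `1 + x[k-1] = [k]`. -/
lemma chow_eq_sum_chains {rk : α → ℕ} (hg : GradedData rk) {mu : α → α → ℤ} (hmu : IsMobius mu)
    {H : α → α → ℤ[X]} (hH : IsChow (chi (rdiff rk) mu) H) (hbt : (⊥ : α) < ⊤) :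
    H ⊥ ⊤ = ∑ C ∈ chainsIn (Ioo (⊥ : α) ⊤),
      gapWt chowGap (C.image rk) * qint (rk (⊤ : α) - (C.image rk).sup id) := by
  have hun : (univ : Finset α) = insert ⊤ (insert ⊥ (Ioo ⊥ ⊤)) := by
    rw [Ioo_insert_left hbt, Ico_insert_right hbt.le, Icc_bot_top]
  rw [chow_eq_sum_chainSum hg hmu hH, hun,
    sum_insert (by simp [hbt.ne']), sum_insert (by simp)]
  have h1 := sum_chainsIn_Ioo hg.mono (⊤ : α) (fun _ => 1)
  simp only [mul_one] at h1
  conv_lhs =>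
    rw [chainSum, if_neg hbt.ne']
    enter [2, 1]
    rw [chainSum, if_pos rfl]
  rw [← h1, ← sum_add_distrib]
  refine sum_congr rfl fun C hC => ?_
  obtain ⟨h2, h3⟩ := gapWt_image_insert hg.mono hC
  rw [h3]
  have h4 : (C.image rk).sup id < rk (⊤ : α) := by
    rw [Finset.sup_lt_iff (by have := hg.mono hbt; simp; omega)]
    exact h2
  obtain ⟨k, hk⟩ := Nat.exists_eq_add_of_lt h4
  rw [show rk (⊤ : α) - (C.image rk).sup id = k + 1 by omega, qint_succ, chowGap,
    Nat.add_sub_cancel]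
  ring

/-- The chain expansion in terms of the flag `f`-vector. -/
lemma chow_eq_sum_flagF {rk : α → ℕ} (hg : GradedData rk) {mu : α → α → ℤ} (hmu : IsMobius mu)
    {H : α → α → ℤ[X]} (hH : IsChow (chi (rdiff rk) mu) H) (hbt : (⊥ : α) < ⊤) :
    H ⊥ ⊤ = ∑ T ∈ (Icc 1 (rk (⊤ : α) - 1)).powerset,
      C (flagF rk T : ℤ) * (gapWt chowGap T * qint (rk (⊤ : α) - T.sup id)) := by
  have hr := hg.mono hbt
  rw [hg.bot] at hr
  rw [chow_eq_sum_chains hg hmu hH hbt]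
  have hmaps : ∀ D ∈ chainsIn (Ioo (⊥ : α) ⊤),
      D.image rk ∈ (Icc 1 (rk (⊤ : α) - 1)).powerset := by
    intro D hD
    rw [mem_powerset]
    intro x hx
    obtain ⟨v, hv, rfl⟩ := mem_image.1 hx
    have hv' := mem_Ioo.1 ((mem_powerset.1 (mem_filter.1 hD).1) hv)
    have h1 := hg.mono hv'.1
    have h2 := hg.mono hv'.2
    rw [hg.bot] at h1
    rw [mem_Icc]; omega
  rw [← sum_fiberwise_of_maps_to hmaps]
  refine sum_congr rfl fun T hT => ?_
  have hfib : (chainsIn (Ioo (⊥ : α) ⊤)).filter (fun D => D.image rk = T)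
      = univ.filter (fun D : Finset α => IsChain (· ≤ ·) (D : Set α) ∧ D.image rk = T) := by
    ext D
    simp only [chainsIn, mem_filter, mem_powerset, mem_univ, true_and]
    refine ⟨fun h => ⟨h.1.2, h.2⟩, fun h => ⟨⟨fun v hv => ?_, h.1⟩, h.2⟩⟩
    have hv' : rk v ∈ Icc 1 (rk (⊤ : α) - 1) :=
      mem_powerset.1 hT (h.2 ▸ mem_image_of_mem rk hv)
    rw [mem_Icc] at hv'
    rw [mem_Ioo, bot_lt_iff_ne_bot, lt_top_iff_ne_top]
    constructor
    · rintro rfl; rw [hg.bot] at hv'; omega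
    · rintro rfl; omega
  rw [sum_congr rfl (g := fun _ => gapWt chowGap T * qint (rk (⊤ : α) - T.sup id))
    (fun D hD => by rw [(mem_filter.1 hD).2]), sum_const, hfib, flagF, nsmul_eq_mul]
  simp

/-- The `γ`-expansion for posets of positive rank. -/
lemma chow_gamma {rk : α → ℕ} (hg : GradedData rk) {mu : α → α → ℤ} (hmu : IsMobius mu)
    {H : α → α → ℤ[X]} (hH : IsChow (chi (rdiff rk) mu) H) (hbt : (⊥ : α) < ⊤) :
    H ⊥ ⊤ = ∑ S ∈ (Icc 1 (rk (⊤ : α) - 1)).powerset.filter Good,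
      C (flagH rk S) * (X ^ S.card * (1 + X) ^ (rk (⊤ : α) - 1 - 2 * S.card)) := by
  have hr := hg.mono hbt
  rw [hg.bot] at hr
  obtain ⟨n, hn⟩ : ∃ n, rk (⊤ : α) = n + 1 := ⟨rk (⊤ : α) - 1, by omega⟩
  rw [chow_eq_sum_flagF hg hmu hH hbt, hn, Nat.add_sub_cancel, sum_filter]
  have h1 : ∀ S ∈ (Icc 1 n).powerset,
      (if Good S then C (flagH rk S) * (X ^ S.card * (1 + X) ^ (n - 2 * S.card)) else 0)
        = ∑ T ∈ (Icc 1 n).powerset, C (flagF rk T : ℤ) * if T ⊆ S then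
            (-1) ^ (S.card - T.card) * (gapWt gamGap S * (1 + X) ^ (n - S.sup id)) else 0 := by
    intro S hS
    have hS' := mem_powerset.1 hS
    obtain ⟨hc, hw⟩ := gapWt_gamGap S (fun h => by simpa using hS' h)
    have hsup := sup_le_of_subset_Icc hS'
    have hpow : S.powerset = (Icc 1 n).powerset.filter (fun T => T ⊆ S) := by
      ext T
      simp only [mem_powerset, mem_filter]
      exact ⟨fun h => ⟨h.trans hS', h⟩, fun h => h.2⟩
    have hF : (if Good S then C (flagH rk S) * (X ^ S.card * (1 + X) ^ (n - 2 * S.card)) else 0)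
        = C (flagH rk S) * (gapWt gamGap S * (1 + X) ^ (n - S.sup id)) := by
      rw [hw]
      split_ifs with hgood
      · have := hc hgood
        rw [show n - 2 * S.card = (S.sup id - 2 * S.card) + (n - S.sup id) by omega, pow_add]
        ring
      · simp
    rw [hF, flagH, hpow, sum_filter, map_sum, sum_mul]
    refine sum_congr rfl fun T _ => ?_
    split_ifs
    · simp only [map_mul, map_pow, map_neg, map_one]; ring
    · simp
  rw [sum_congr rfl h1, sum_comm]
  refine sum_congr rfl fun T hT => ?_
  rw [← mul_sum]
  congr 1
  exact (sgnSum_gapWt n T (mem_powerset.1 hT)).1.symm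

end Chow

end

/-- Theorem 4.19 (+ Theorem 4.14): for a finite graded bounded poset `P` of rank `r`, the
`γ`-polynomial of the `χ`-Chow polynomial `ℋ_P(x)` (symmetric with center `(r-1)/2`) satisfies
`γ(ℋ_P, x) = Σ_{S ⊆ {1,…,r-1} good} β_P(S) x^{|S|}`, where `S` is good when `1 ∉ S` and `S` has
no two consecutive integers; equivalently
`ℋ_P(x) = Σ_{S good} β_P(S) x^{|S|} (1+x)^{r-1-2|S|}`.  Consequently, if the flag `h`-vector of
`P` is non-negative (in particular if `P` is Cohen–Macaulay) then `ℋ_P(x)` is `γ`-positive. -/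
theorem chi_chow_gamma_from_flag_h {α : Type*}
    [PartialOrder α] [BoundedOrder α] [Fintype α] [LocallyFiniteOrder α]
    (rk : α → ℕ) (hg : GradedData rk)
    (mu : α → α → ℤ) (hmu : IsMobius mu)
    (H : α → α → Polynomial ℤ) (hH : IsChow (chi (rdiff rk) mu) H) :
    H ⊥ ⊤
      = ∑ S ∈ (Finset.Icc 1 (rk (⊤ : α) - 1)).powerset.filter
            (fun S : Finset ℕ => 1 ∉ S ∧ ∀ i ∈ S, i + 1 ∉ S),
          Polynomial.C (flagH rk S) *
            (X ^ S.card * (1 + X) ^ (rk (⊤ : α) - 1 - 2 * S.card)) ∧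
    ((∀ S : Finset ℕ, 0 ≤ flagH rk S) →
      ∃ γ : ℕ → ℤ, (∀ i, 0 ≤ γ i) ∧
        H ⊥ ⊤ = ∑ i ∈ Finset.range ((rk (⊤ : α) - 1) / 2 + 1),
          Polynomial.C (γ i) * (X ^ i * (1 + X) ^ (rk (⊤ : α) - 1 - 2 * i))) := by
  have main : H ⊥ ⊤ = ∑ S ∈ (Finset.Icc 1 (rk (⊤ : α) - 1)).powerset.filter Good,
      Polynomial.C (flagH rk S) * (X ^ S.card * (1 + X) ^ (rk (⊤ : α) - 1 - 2 * S.card)) := by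
    rcases (bot_le : (⊥ : α) ≤ ⊤).lt_or_eq with hbt | hbt
    · exact chow_gamma hg hmu hH hbt
    -- rank zero: both sides are `1`
    · have hH1 : H ⊥ ⊤ = 1 := by
        rw [chow_eq_sum_chainSum hg hmu hH]
        have hb : ∀ w : α, w = ⊥ := fun w => le_bot_iff.1 (hbt ▸ le_top)
        rw [Finset.sum_eq_single ⊥ (fun w _ hw => absurd (hb w) hw) (by simp)]
        simp [chainSum]
      have hr : rk (⊤ : α) = 0 := hbt ▸ hg.bot
      have hF : flagF rk ∅ = 1 := by
        rw [flagF, Finset.card_eq_one]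
        refine ⟨∅, ?_⟩
        ext D
        simp only [Finset.mem_filter, Finset.mem_univ, true_and, Finset.image_eq_empty,
          Finset.mem_singleton]
        exact ⟨fun h => h.2, fun h => by subst h; simp⟩
      rw [hH1, hr, show Finset.Icc 1 (0 - 1) = ∅ by simp, Finset.powerset_empty,
        Finset.filter_singleton, if_pos (by simp [Good])]
      simp [flagH, hF]
  refine ⟨by rw [main]; exact Finset.sum_congr (by ext S; simp [Good]) fun _ _ => rfl, ?_⟩
  intro hpos
  refine ⟨fun i => ∑ S ∈ ((Finset.Icc 1 (rk (⊤ : α) - 1)).powerset.filter Good).filter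
    (fun S => S.card = i), flagH rk S, fun i => Finset.sum_nonneg fun S _ => hpos S, ?_⟩
  have hmaps : ∀ S ∈ (Finset.Icc 1 (rk (⊤ : α) - 1)).powerset.filter Good,
      S.card ∈ Finset.range ((rk (⊤ : α) - 1) / 2 + 1) := by
    intro S hS
    obtain ⟨h1, h2⟩ := Finset.mem_filter.1 hS
    have h3 := Finset.mem_powerset.1 h1
    have h4 := (gapWt_gamGap S (fun h => by simpa using h3 h)).1 h2
    have h5 := sup_le_of_subset_Icc h3
    rw [Finset.mem_range]; omega
  rw [main, ← Finset.sum_fiberwise_of_maps_to hmaps]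
  refine Finset.sum_congr rfl fun i _ => ?_
  rw [map_sum, Finset.sum_mul]
  refine Finset.sum_congr rfl fun S hS => ?_
  rw [(Finset.mem_filter.1 hS).2]
end
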